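/- arXiv:2508.02615 — 2 statements merged into one kernel-verified Lean document; each statement's English description precedes it below -/
import Mathlib

section
/- Let (E,d_E) be a separable metric space, let p ≥ 1, let μ, μ̃ ∈ 𝒫_p(E) and let n ∈ ℕ. Let μ_n be an empirical measure of μ with sample size n and let μ̃_n be an empirical measure of μ̃ with sample size n. Then | ‖W_p(μ_n, μ)‖_{L^p} − ‖W_p(μ̃_n, μ̃)‖_{L^p} | ≤ 2 · W_p(μ, μ̃), where for a random variable W, ‖W‖_{L^p} = (𝔼|W|^p)^{1/p}. -/
open MeasureTheory ENNReal Filter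

noncomputable section

/-- The `p`-Wasserstein distance between two measures on a metric space, as an
extended nonnegative real: the infimum over all couplings `γ` (measures on `E × E`
with the prescribed marginals) of `(∫ d(x,y)^p dγ)^(1/p)`. -/
def Wp {E : Type*} [MetricSpace E] [MeasurableSpace E] (p : ℝ) (μ ν : Measure E) : ℝ≥0∞ :=
  ⨅ γ ∈ {γ : Measure (E × E) | γ.map Prod.fst = μ ∧ γ.map Prod.snd = ν},
    (∫⁻ z, edist z.1 z.2 ^ p ∂γ) ^ (1 / p)

/-- The (uniform) discrete measure `(1/n) ∑ δ_{X i}`. -/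
def empiricalMeasure {E : Type*} [MeasurableSpace E] (n : ℕ) (X : Fin n → E) : Measure E :=
  (n : ℝ≥0∞)⁻¹ • ∑ i, Measure.dirac (X i)

/-- The law of `n` independent samples of `μ`. -/
def sampleMeasure {E : Type*} [MeasurableSpace E] (μ : Measure E) (n : ℕ) :
    Measure (Fin n → E) :=
  Measure.pi fun _ => μ

/-- `𝔼[W_p(μ_n, μ)]`, where `μ_n` is the empirical measure of `μ` with sample size `n`. -/
def expWp {E : Type*} [MetricSpace E] [MeasurableSpace E] (p : ℝ) (μ : Measure E) (n : ℕ) :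
    ℝ≥0∞ :=
  ∫⁻ X, Wp p (empiricalMeasure n X) μ ∂(sampleMeasure μ n)

/-- `(𝔼[W_p(μ_n, μ)^p])^{1/p}`, where `μ_n` is the empirical measure of `μ` with
sample size `n`. -/
def expWpPow {E : Type*} [MetricSpace E] [MeasurableSpace E] (p : ℝ) (μ : Measure E) (n : ℕ) :
    ℝ≥0∞ :=
  (∫⁻ X, (Wp p (empiricalMeasure n X) μ) ^ p ∂(sampleMeasure μ n)) ^ (1 / p)

/-- The optimal uniform quantization error
`b_{n,p}(μ) = inf_{x₁,…,x_n} W_p(μ, (1/n) ∑ δ_{x_i})`. -/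
def unifQuantErr {E : Type*} [MetricSpace E] [MeasurableSpace E] (p : ℝ) (n : ℕ)
    (μ : Measure E) : ℝ≥0∞ :=
  ⨅ x : Fin n → E, Wp p μ (empiricalMeasure n x)

/-- The optimal quantization error `e_{n,p}(μ)`: the infimum of `W_p(μ, ν)` over all
probability measures `ν` supported on at most `n` points. -/
def quantErr {E : Type*} [MetricSpace E] [MeasurableSpace E] (p : ℝ) (n : ℕ)
    (μ : Measure E) : ℝ≥0∞ :=
  ⨅ ν ∈ {ν : Measure E | IsProbabilityMeasure ν ∧
      ∃ S : Finset E, S.card ≤ n ∧ ν (↑S : Set E)ᶜ = 0}, Wp p μ ν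

/-- `μ` has a finite `p`-th moment: `∫ d(x, x₀)^p dμ(x) < ∞` for some `x₀`. -/
def HasFiniteMoment {E : Type*} [MetricSpace E] [MeasurableSpace E] (p : ℝ)
    (μ : Measure E) : Prop :=
  ∃ x₀ : E, ∫⁻ x, edist x x₀ ^ p ∂μ ≠ ∞

end

/-!
Let `(Xᵢ, Yᵢ)` be independent samples of a coupling `γ` of `μ` and `μ'`. Pairing `Xᵢ` with `Yᵢ`
gives `W_p(μ_n, μ'_n)^p ≤ (1/n) ∑ d(Xᵢ, Yᵢ)^p`, whose expectation is `∫ d^p ∂γ`. Hence, taking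
`L^p` norms in `W_p(μ_n, μ) ≤ W_p(μ_n, μ'_n) + W_p(μ'_n, μ') + W_p(μ', μ)`, the first term
contributes at most the cost of `γ`, and the infimum over `γ` is `W_p(μ, μ')`.

Since `E` is not assumed complete, disintegration, and with it the gluing of couplings, is not
available for all measures on `E`. It is available for images of measures on standard Borel spaces,
in particular for empirical measures, which are images of the uniform measure on `Fin n`.
-/

section Coupling

open ProbabilityTheory

variable {α β δ ε : Type*} [MeasurableSpace α] [MeasurableSpace β] [MeasurableSpace δ]
  [MeasurableSpace ε]

lemma map_prodMap_compProd_comap {μ : Measure α} [SFinite μ] {f : α → β} (hf : Measurable f)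
    (κ : Kernel β δ) [IsSFiniteKernel κ] :
    (μ ⊗ₘ κ.comap f hf).map (Prod.map f id) = μ.map f ⊗ₘ κ := by
  have hf' : Measurable (Prod.map f (id : δ → δ)) := hf.prodMap measurable_id
  ext s hs
  rw [Measure.map_apply hf' hs, Measure.compProd_apply (hf' hs), Measure.compProd_apply hs,
    lintegral_map (Kernel.measurable_kernel_prodMk_left hs) hf]
  rfl

/-- `γ` is a coupling of `μ` and `ν`: a measure on the product with these marginals. -/
structure IsCoupling (γ : Measure (α × β)) (μ : Measure α) (ν : Measure β) : Prop where
  map_fst : γ.map Prod.fst = μ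
  map_snd : γ.map Prod.snd = ν

namespace IsCoupling

variable {γ : Measure (α × β)} {η : Measure (β × δ)} {μ : Measure α} {ν : Measure β}
  {ρ : Measure δ} {σ : Measure ε}

lemma swap (h : IsCoupling γ μ ν) : IsCoupling (γ.map Prod.swap) ν μ where
  map_fst := by rw [Measure.map_map measurable_fst measurable_swap]; exact h.map_snd
  map_snd := by rw [Measure.map_map measurable_snd measurable_swap]; exact h.map_fst

lemma isFiniteMeasure [IsFiniteMeasure μ] (h : IsCoupling γ μ ν) : IsFiniteMeasure γ :=
  have : IsFiniteMeasure (γ.map Prod.fst) := h.map_fst ▸ inferInstance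
  Measure.isFiniteMeasure_of_map measurable_fst.aemeasurable

lemma isProbabilityMeasure [IsProbabilityMeasure μ] (h : IsCoupling γ μ ν) :
    IsProbabilityMeasure γ :=
  have : IsProbabilityMeasure (γ.map Prod.fst) := h.map_fst ▸ inferInstance
  Measure.isProbabilityMeasure_of_map Prod.fst

lemma of_gluing (hγ : IsCoupling γ μ ν) (hη : IsCoupling η ν ρ) {π : Measure (α × β × δ)}
    (hπγ : π.map (fun w => (w.1, w.2.1)) = γ) (hπη : π.map Prod.snd = η) :
    IsCoupling (π.map fun w => (w.1, w.2.2)) μ ρ where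
  map_fst := by
    rw [← hγ.map_fst, ← hπγ, Measure.map_map measurable_fst (by fun_prop),
      Measure.map_map measurable_fst (by fun_prop)]
    rfl
  map_snd := by
    rw [← hη.map_snd, ← hπη, Measure.map_map measurable_snd (by fun_prop),
      Measure.map_map measurable_snd measurable_snd]
    rfl

theorem exists_gluing [StandardBorelSpace α] [Nonempty α] [IsFiniteMeasure μ]
    (hγ : IsCoupling γ μ ν) (hη : IsCoupling η ν ρ) :
    ∃ π : Measure (α × β × δ),
      π.map (fun w => (w.1, w.2.1)) = γ ∧ π.map Prod.snd = η := by
  have := hγ.isFiniteMeasure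
  have : IsFiniteMeasure ν := hγ.map_snd ▸ inferInstance
  have := hη.isFiniteMeasure
  let κ : Kernel β α := (γ.map Prod.swap).condKernel
  have hκ : ν ⊗ₘ κ = γ.map Prod.swap := by
    rw [← hγ.swap.map_fst]; exact (γ.map Prod.swap).disintegrate κ
  let π : Measure ((β × δ) × α) := η ⊗ₘ κ.comap Prod.fst measurable_fst
  refine ⟨π.map Prod.swap, ?_, ?_⟩
  · calc (π.map Prod.swap).map (fun w => (w.1, w.2.1))
      _ = (π.map (Prod.map Prod.fst id)).map Prod.swap := by
        rw [Measure.map_map (by fun_prop) (by fun_prop),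
          Measure.map_map (by fun_prop) (by fun_prop)]
        rfl
      _ = (ν ⊗ₘ κ).map Prod.swap := by
        rw [map_prodMap_compProd_comap, hη.map_fst]
      _ = γ := by
        rw [hκ, Measure.map_map measurable_swap measurable_swap, Prod.swap_swap_eq, Measure.map_id]
  · rw [Measure.map_map measurable_snd measurable_swap]
    exact Measure.fst_compProd _ _

lemma graph {f : α → β} (hf : Measurable f) (μ : Measure α) :
    IsCoupling (μ.map fun x => (x, f x)) μ (μ.map f) where
  map_fst := by
    rw [Measure.map_map measurable_fst (by fun_prop)]
    exact Measure.map_id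
  map_snd := Measure.map_map measurable_snd (by fun_prop)

-- Glue the coupling of `μ` and `μ.map f` carried by the graph of `f` to `γ`.
theorem exists_lift [MeasurableEq β] [StandardBorelSpace α] [Nonempty α] [IsFiniteMeasure μ]
    {f : α → β} (hf : Measurable f) {γ : Measure (β × δ)} (hγ : IsCoupling γ (μ.map f) ρ) :
    ∃ θ : Measure (α × δ), IsCoupling θ μ ρ ∧ θ.map (Prod.map f id) = γ := by
  obtain ⟨π, hπ_graph, hπ_γ⟩ := (graph hf μ).exists_gluing hγ
  have h_ae : ∀ᵐ w ∂π, f w.1 = w.2.1 := by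
    have h_graph : ∀ᵐ z ∂(π.map fun w => (w.1, w.2.1)), f z.1 = z.2 := by
      rw [hπ_graph, ae_map_iff (by fun_prop) (measurableSet_eq_fun (by fun_prop) (by fun_prop))]
      exact .of_forall fun _ => rfl
    exact ae_of_ae_map (by fun_prop) h_graph
  refine ⟨π.map fun w => (w.1, w.2.2), (graph hf μ).of_gluing hγ hπ_graph hπ_γ, ?_⟩
  rw [← hπ_γ, Measure.map_map (by fun_prop) (by fun_prop)]
  exact Measure.map_congr (h_ae.mono fun w hw => Prod.ext hw rfl)

theorem exists_gluing_of_map [MeasurableEq β] [StandardBorelSpace α] [Nonempty α]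
    [IsFiniteMeasure μ] {f : α → β} (hf : Measurable f) {γ : Measure (β × δ)}
    {η : Measure (δ × ε)} (hγ : IsCoupling γ (μ.map f) ρ) (hη : IsCoupling η ρ σ) :
    ∃ π : Measure (β × δ × ε),
      π.map (fun w => (w.1, w.2.1)) = γ ∧ π.map Prod.snd = η := by
  obtain ⟨θ, hθ, hθγ⟩ := hγ.exists_lift hf
  obtain ⟨π, hπθ, hπη⟩ := hθ.exists_gluing hη
  refine ⟨π.map (Prod.map f id), ?_, ?_⟩
  · rw [← hθγ, ← hπθ, Measure.map_map (by fun_prop) (by fun_prop),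
      Measure.map_map (by fun_prop) (by fun_prop)]
    rfl
  · rw [← hπη, Measure.map_map measurable_snd (by fun_prop)]
    rfl

end IsCoupling

end Coupling

section EmpiricalMeasure

variable {α β : Type*} [MeasurableSpace α] [MeasurableSpace β]

lemma lintegral_empiricalMeasure (n : ℕ) (X : Fin n → α) {f : α → ℝ≥0∞} (hf : Measurable f) :
    ∫⁻ x, f x ∂(empiricalMeasure n X) = (n : ℝ≥0∞)⁻¹ * ∑ i, f (X i) := by
  simp only [empiricalMeasure, lintegral_smul_measure, lintegral_finsetSum_measure,
    lintegral_dirac' _ hf, smul_eq_mul]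

lemma empiricalMeasure_map (n : ℕ) (X : Fin n → α) {f : α → β} (hf : Measurable f) :
    (empiricalMeasure n X).map f = empiricalMeasure n (f ∘ X) := by
  ext s hs
  simp only [empiricalMeasure, Measure.map_apply hf hs, Measure.smul_apply,
    Measure.finsetSum_apply, Measure.dirac_apply' _ hs, Measure.dirac_apply' _ (hf hs)]
  rfl

lemma isCoupling_empiricalMeasure (n : ℕ) (Z : Fin n → α × β) :
    IsCoupling (empiricalMeasure n Z) (empiricalMeasure n fun i => (Z i).1)
      (empiricalMeasure n fun i => (Z i).2) where
  map_fst := empiricalMeasure_map n Z measurable_fst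
  map_snd := empiricalMeasure_map n Z measurable_snd

instance isProbabilityMeasure_empiricalMeasure (n : ℕ) [NeZero n] (X : Fin n → α) :
    IsProbabilityMeasure (empiricalMeasure n X) where
  measure_univ := by
    simp [empiricalMeasure, ENNReal.inv_mul_cancel (NeZero.ne (n : ℝ≥0∞)) (natCast_ne_top n)]

instance isProbabilityMeasure_sampleMeasure (μ : Measure α) [IsProbabilityMeasure μ] (n : ℕ) :
    IsProbabilityMeasure (sampleMeasure μ n) :=
  inferInstanceAs (IsProbabilityMeasure (Measure.pi _))

lemma measurePreserving_sampleMeasure {μ : Measure α} {ν : Measure β} [SigmaFinite ν] {f : α → β}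
    (hf : MeasurePreserving f μ ν) (n : ℕ) :
    MeasurePreserving (fun X i => f (X i)) (sampleMeasure μ n) (sampleMeasure ν n) :=
  measurePreserving_pi _ _ fun _ => hf

lemma lintegral_lintegral_empiricalMeasure (μ : Measure α) [IsProbabilityMeasure μ] (n : ℕ)
    [NeZero n] {f : α → ℝ≥0∞} (hf : Measurable f) :
    ∫⁻ X, ∫⁻ x, f x ∂(empiricalMeasure n X) ∂(sampleMeasure μ n) = ∫⁻ x, f x ∂μ := by
  have h_eval (i : Fin n) : ∫⁻ X, f (X i) ∂(sampleMeasure μ n) = ∫⁻ x, f x ∂μ :=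
    (measurePreserving_eval (fun _ => μ) i).lintegral_comp hf
  simp only [lintegral_empiricalMeasure n _ hf]
  rw [lintegral_const_mul _ (by fun_prop), lintegral_finsetSum _ (by fun_prop)]
  simp only [h_eval, Finset.sum_const, Finset.card_univ, Fintype.card_fin, nsmul_eq_mul]
  rw [← mul_assoc, ENNReal.inv_mul_cancel (NeZero.ne (n : ℝ≥0∞)) (natCast_ne_top n), one_mul]

end EmpiricalMeasure

section Wasserstein

variable {E : Type*} [MetricSpace E] [MeasurableSpace E] {p : ℝ}

/-- The `L^p` norm of the distance under `γ`, whose infimum over couplings is `Wp`. -/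
noncomputable def transportCost (p : ℝ) (γ : Measure (E × E)) : ℝ≥0∞ :=
  eLpNorm (fun z => edist z.1 z.2) (ENNReal.ofReal p) γ

lemma eLpNorm_ofReal_eq_lintegral {α : Type*} [MeasurableSpace α] (hp : 0 < p) (f : α → ℝ≥0∞)
    (μ : Measure α) :
    eLpNorm f (ENNReal.ofReal p) μ = (∫⁻ x, f x ^ p ∂μ) ^ (1 / p) := by
  simp [eLpNorm_eq_lintegral_rpow_enorm_toReal (ofReal_pos.2 hp).ne' ofReal_ne_top, hp.le]

lemma Wp_eq_iInf_transportCost (hp : 0 < p) (μ ν : Measure E) :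
    Wp p μ ν = ⨅ (γ) (_ : IsCoupling γ μ ν), transportCost p γ := by
  simp only [Wp, transportCost, eLpNorm_ofReal_eq_lintegral hp]
  exact iInf_congr fun γ => iInf_congr_Prop ⟨fun h => ⟨h.1, h.2⟩, fun h => ⟨h.1, h.2⟩⟩ fun _ => rfl

lemma expWpPow_eq_eLpNorm (hp : 0 < p) (μ : Measure E) (n : ℕ) :
    expWpPow p μ n =
      eLpNorm (fun X => Wp p (empiricalMeasure n X) μ) (ENNReal.ofReal p) (sampleMeasure μ n) :=
  (eLpNorm_ofReal_eq_lintegral hp _ _).symm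

lemma IsCoupling.Wp_le (hp : 0 < p) {γ : Measure (E × E)} {μ ν : Measure E}
    (hγ : IsCoupling γ μ ν) : Wp p μ ν ≤ transportCost p γ :=
  (Wp_eq_iInf_transportCost hp μ ν).trans_le (iInf₂_le γ hγ)

variable [SecondCountableTopology E] [OpensMeasurableSpace E]

lemma transportCost_map {α : Type*} [MeasurableSpace α] {f : α → E × E} (hf : Measurable f)
    (γ : Measure α) :
    transportCost p (γ.map f) =
      eLpNorm (fun x => edist (f x).1 (f x).2) (ENNReal.ofReal p) γ :=
  eLpNorm_map_measure measurable_edist.aestronglyMeasurable hf.aemeasurable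

lemma transportCost_swap (γ : Measure (E × E)) :
    transportCost p (γ.map Prod.swap) = transportCost p γ := by
  rw [transportCost_map measurable_swap, transportCost]
  simp only [Prod.fst_swap, Prod.snd_swap, edist_comm]

lemma Wp_comm (hp : 0 < p) (μ ν : Measure E) : Wp p μ ν = Wp p ν μ := by
  have h_le (μ ν : Measure E) : Wp p μ ν ≤ Wp p ν μ := by
    rw [Wp_eq_iInf_transportCost hp ν μ]
    exact le_iInf₂ fun γ hγ => (hγ.swap.Wp_le hp).trans_eq (transportCost_swap γ)
  exact (h_le μ ν).antisymm (h_le ν μ)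

lemma transportCost_map_prodMk_le (hp : 1 ≤ p) (π : Measure (E × E × E)) :
    transportCost p (π.map fun w => (w.1, w.2.2)) ≤
      transportCost p (π.map fun w => (w.1, w.2.1)) + transportCost p (π.map Prod.snd) := by
  rw [transportCost_map (by fun_prop), transportCost_map (by fun_prop),
    transportCost_map (by fun_prop)]
  exact (eLpNorm_mono_enorm fun w => edist_triangle w.1 w.2.1 w.2.2).trans <|
    eLpNorm_add_le (by fun_prop) (by fun_prop) (one_le_ofReal.2 hp)

theorem Wp_map_triangle (hp : 1 ≤ p) {Ω : Type*} [MeasurableSpace Ω] [StandardBorelSpace Ω]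
    [Nonempty Ω] (m : Measure Ω) [IsFiniteMeasure m] {X : Ω → E} (hX : Measurable X)
    (ν ρ : Measure E) : Wp p (m.map X) ρ ≤ Wp p (m.map X) ν + Wp p ν ρ := by
  have hp₀ : 0 < p := by positivity
  rw [Wp_eq_iInf_transportCost hp₀ _ ν, Wp_eq_iInf_transportCost hp₀ ν ρ]
  simp only [ENNReal.iInf_add, ENNReal.add_iInf]
  refine le_iInf₂ fun η hη => le_iInf₂ fun γ hγ => ?_
  obtain ⟨π, rfl, rfl⟩ := hγ.exists_gluing_of_map hX hη
  exact ((hγ.of_gluing hη rfl rfl).Wp_le hp₀).trans (transportCost_map_prodMk_le hp π)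

lemma Wp_empiricalMeasure_triangle (hp : 1 ≤ p) {n : ℕ} [NeZero n] (X : Fin n → E)
    (ν ρ : Measure E) :
    Wp p (empiricalMeasure n X) ρ ≤ Wp p (empiricalMeasure n X) ν + Wp p ν ρ := by
  have hX : Measurable X := measurable_of_finite X
  have h_map : (empiricalMeasure n id).map X = empiricalMeasure n X := empiricalMeasure_map n id hX
  simpa only [h_map] using Wp_map_triangle hp (empiricalMeasure n id) hX ν ρ

lemma transportCost_empiricalMeasure_le_edist {n : ℕ} [NeZero n] (X Y : Fin n → E) :
    transportCost p (empiricalMeasure n fun i => (X i, Y i)) ≤ edist X Y := by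
  have h_map := empiricalMeasure_map n id (measurable_of_finite fun i => (X i, Y i))
  rw [Function.comp_id] at h_map
  rw [← h_map, transportCost_map (measurable_of_finite _)]
  refine (eLpNorm_le_of_ae_enorm_bound (.of_forall fun i => edist_le_pi_edist X Y i)).trans_eq ?_
  simp

lemma continuous_Wp_empiricalMeasure (hp : 1 ≤ p) (n : ℕ) [NeZero n] (μ : Measure E) :
    Continuous fun X : Fin n → E => Wp p (empiricalMeasure n X) μ := by
  refine continuous_of_le_add_edist 1 one_ne_top fun X Y => ?_
  have h_lip : Wp p (empiricalMeasure n X) (empiricalMeasure n Y) ≤ edist X Y :=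
    ((isCoupling_empiricalMeasure n fun i => (X i, Y i)).Wp_le (by positivity)).trans
      (transportCost_empiricalMeasure_le_edist X Y)
  calc Wp p (empiricalMeasure n X) μ
    _ ≤ Wp p (empiricalMeasure n X) (empiricalMeasure n Y) + Wp p (empiricalMeasure n Y) μ :=
      Wp_empiricalMeasure_triangle hp X _ μ
    _ ≤ Wp p (empiricalMeasure n Y) μ + 1 * edist X Y := by
      rw [one_mul, add_comm]
      gcongr

lemma measurable_transportCost_empiricalMeasure (hp : 0 < p) (n : ℕ) :
    Measurable fun Z : Fin n → E × E => transportCost p (empiricalMeasure n Z) := by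
  have h_cost : Measurable fun z : E × E => edist z.1 z.2 ^ p := by fun_prop
  simp only [transportCost, eLpNorm_ofReal_eq_lintegral hp, lintegral_empiricalMeasure n _ h_cost]
  fun_prop

lemma eLpNorm_transportCost_empiricalMeasure (hp : 0 < p) (γ : Measure (E × E))
    [IsProbabilityMeasure γ] (n : ℕ) [NeZero n] :
    eLpNorm (fun Z => transportCost p (empiricalMeasure n Z)) (ENNReal.ofReal p)
      (sampleMeasure γ n) = transportCost p γ := by
  simp only [transportCost, eLpNorm_ofReal_eq_lintegral hp, one_div, ENNReal.rpow_inv_rpow hp.ne']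
  rw [lintegral_lintegral_empiricalMeasure γ n (by fun_prop)]

lemma expWpPow_eq_eLpNorm_of_measurePreserving (hp : 1 ≤ p) {α : Type*} [MeasurableSpace α]
    {m : Measure α} {μ : Measure E} [SigmaFinite μ] {f : α → E} (hf : MeasurePreserving f m μ)
    (n : ℕ) [NeZero n] :
    expWpPow p μ n =
      eLpNorm (fun Z => Wp p (empiricalMeasure n fun i => f (Z i)) μ) (ENNReal.ofReal p)
        (sampleMeasure m n) :=
  (expWpPow_eq_eLpNorm (by positivity) μ n).trans <| .symm <|
    eLpNorm_comp_measurePreserving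
      (continuous_Wp_empiricalMeasure hp n μ).measurable.aestronglyMeasurable
      (measurePreserving_sampleMeasure hf n)

lemma Wp_empiricalMeasure_fst_le (hp : 1 ≤ p) {n : ℕ} [NeZero n] (Z : Fin n → E × E)
    (μ μ' : Measure E) :
    Wp p (empiricalMeasure n fun i => (Z i).1) μ ≤
      transportCost p (empiricalMeasure n Z) +
        (Wp p (empiricalMeasure n fun i => (Z i).2) μ' + Wp p μ' μ) :=
  (Wp_empiricalMeasure_triangle hp _ (empiricalMeasure n fun i => (Z i).2) μ).trans <|
    add_le_add ((isCoupling_empiricalMeasure n Z).Wp_le (by positivity))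
      (Wp_empiricalMeasure_triangle hp _ μ' μ)

theorem IsCoupling.expWpPow_le (hp : 1 ≤ p) {γ : Measure (E × E)} {μ μ' : Measure E}
    [IsProbabilityMeasure μ] (hγ : IsCoupling γ μ μ') (n : ℕ) [NeZero n] :
    expWpPow p μ n ≤ transportCost p γ + (expWpPow p μ' n + Wp p μ' μ) := by
  have hp₀ : 0 < p := by positivity
  have hp' : 1 ≤ ENNReal.ofReal p := one_le_ofReal.2 hp
  have := hγ.isProbabilityMeasure
  have : IsProbabilityMeasure μ' :=
    hγ.map_snd ▸ Measure.isProbabilityMeasure_map measurable_snd.aemeasurable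
  let D (Z : Fin n → E × E) := transportCost p (empiricalMeasure n Z)
  let W' (Z : Fin n → E × E) := Wp p (empiricalMeasure n fun i => (Z i).2) μ'
  have hD : Measurable D := measurable_transportCost_empiricalMeasure hp₀ n
  have hW' : Measurable W' :=
    (continuous_Wp_empiricalMeasure hp n μ').measurable.comp (by fun_prop)
  calc expWpPow p μ n
    _ = eLpNorm (fun Z => Wp p (empiricalMeasure n fun i => (Z i).1) μ) (ENNReal.ofReal p)
          (sampleMeasure γ n) :=
      expWpPow_eq_eLpNorm_of_measurePreserving hp ⟨measurable_fst, hγ.map_fst⟩ n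
    _ ≤ eLpNorm (D + (W' + fun _ => Wp p μ' μ)) (ENNReal.ofReal p) (sampleMeasure γ n) :=
      eLpNorm_mono_enorm fun Z => Wp_empiricalMeasure_fst_le hp Z μ μ'
    _ ≤ eLpNorm D (ENNReal.ofReal p) (sampleMeasure γ n) +
          (eLpNorm W' (ENNReal.ofReal p) (sampleMeasure γ n) +
            eLpNorm (fun _ => Wp p μ' μ) (ENNReal.ofReal p) (sampleMeasure γ n)) :=
      (eLpNorm_add_le (by fun_prop) (by fun_prop) hp').trans
        (by gcongr; exact eLpNorm_add_le (by fun_prop) (by fun_prop) hp')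
    _ = transportCost p γ + (expWpPow p μ' n + Wp p μ' μ) := by
      rw [eLpNorm_transportCost_empiricalMeasure hp₀,
        ← expWpPow_eq_eLpNorm_of_measurePreserving hp ⟨measurable_snd, hγ.map_snd⟩ n,
        eLpNorm_const' _ (by positivity) ofReal_ne_top]
      simp

theorem expWpPow_le_add_two_mul_Wp (hp : 1 ≤ p) (μ μ' : Measure E) [IsProbabilityMeasure μ]
    (n : ℕ) [NeZero n] : expWpPow p μ n ≤ expWpPow p μ' n + 2 * Wp p μ μ' := by
  have hp₀ : 0 < p := by positivity
  calc expWpPow p μ n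
    _ ≤ Wp p μ μ' + (expWpPow p μ' n + Wp p μ' μ) := by
      rw [Wp_eq_iInf_transportCost hp₀ μ μ']
      simp only [ENNReal.iInf_add]
      exact le_iInf₂ fun γ hγ => hγ.expWpPow_le hp n
    _ = expWpPow p μ' n + 2 * Wp p μ μ' := by
      rw [Wp_comm hp₀ μ' μ]
      ring

end Wasserstein

theorem stmt_11_general {E : Type*} [MetricSpace E] [TopologicalSpace.SeparableSpace E]
    [MeasurableSpace E] [OpensMeasurableSpace E] (p : ℝ) (hp : 1 ≤ p) (μ μ' : Measure E)
    [IsProbabilityMeasure μ] [IsProbabilityMeasure μ'] (n : ℕ) (hn : 1 ≤ n) :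
    expWpPow p μ n ≤ expWpPow p μ' n + 2 * Wp p μ μ' ∧
    expWpPow p μ' n ≤ expWpPow p μ n + 2 * Wp p μ μ' := by
  have : SecondCountableTopology E := UniformSpace.secondCountable_of_separable E
  have : NeZero n := .of_pos hn
  refine ⟨expWpPow_le_add_two_mul_Wp hp μ μ' n, ?_⟩
  rw [Wp_comm (by positivity) μ μ']
  exact expWpPow_le_add_two_mul_Wp hp _ _ n

/-- **Lemma (easybound).** Let `(E, d_E)` be a separable metric space, `p ≥ 1`,
`μ, μ̃ ∈ 𝒫_p(E)` and `n ∈ ℕ`. Then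
`| ‖W_p(μ_n, μ)‖_{L^p} − ‖W_p(μ̃_n, μ̃)‖_{L^p} | ≤ 2 W_p(μ, μ̃)`, stated as the pair
of one-sided inequalities (the two sides may a priori be infinite). -/
theorem stmt_11 {E : Type*} [MetricSpace E] [TopologicalSpace.SeparableSpace E]
    [MeasurableSpace E] [BorelSpace E]
    (p : ℝ) (hp : 1 ≤ p)
    (μ μ' : Measure E) [IsProbabilityMeasure μ] [IsProbabilityMeasure μ']
    (hμ : HasFiniteMoment p μ) (hμ' : HasFiniteMoment p μ')
    (n : ℕ) (hn : 1 ≤ n) :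
    expWpPow p μ n ≤ expWpPow p μ' n + 2 * Wp p μ μ' ∧
    expWpPow p μ' n ≤ expWpPow p μ n + 2 * Wp p μ μ' :=
  stmt_11_general p hp μ μ' n hn
end

section
/- Let (E,d_E) be a finite metric space, let p ≥ 1, let T : E → E be a map, and let μ and ν be probability measures on E. Then W_p^$(μ, ν) ≤ W_p^$(T_#μ, T_#ν) + 2^{1 − 1/p} · (∑_{x ∈ E} d_E(x, T(x))^p · |μ({x}) − ν({x})|)^{1/p}, where T_#μ denotes the pushforward of μ by T. -/
open MeasureTheory ENNReal Filter

/-- The measure `μ∧ν` on a finite space, with `(μ∧ν)({x}) = min(μ({x}), ν({x}))`. -/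
noncomputable def measInf {E : Type*} [Fintype E] [MeasurableSpace E]
    (μ ν : Measure E) : Measure E :=
  ∑ x : E, min (μ {x}) (ν {x}) • Measure.dirac x

/-- `W_p^$(μ,ν)`: equal to `0` when `μ = ν`, and otherwise to
`(1 − (μ∧ν)(E))^{1/p} W_p((μ − μ∧ν)/(1 − (μ∧ν)(E)), (ν − μ∧ν)/(1 − (μ∧ν)(E)))`. -/
noncomputable def WpDollar {E : Type*} [MetricSpace E] [Fintype E] [MeasurableSpace E]
    (p : ℝ) (μ ν : Measure E) : ℝ≥0∞ :=
  if μ = ν then 0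
  else
    (1 - measInf μ ν Set.univ) ^ (1 / p) *
      Wp p ((1 - measInf μ ν Set.univ)⁻¹ • (μ - measInf μ ν))
        ((1 - measInf μ ν Set.univ)⁻¹ • (ν - measInf μ ν))

/-!
Since `W_p` scales, `W_p^$(μ, ν)` is the cost of transporting the residual `μ - μ ∧ ν` to the
residual `ν - μ ∧ ν`. Routing this transport through `T` (the triangle inequality) costs at most
the distance between the images of the residuals plus `a^{1/p} + b^{1/p}`, where `a` and `b` are
the `p`-costs of moving each residual along `T`; concavity of `t ↦ t^{1/p}` bounds this sum by
`2^{1 - 1/p} (a + b)^{1/p}`. Finally `T_#(μ ∧ ν) ≤ T_#μ ∧ T_#ν`, so the images of the residuals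
are the residuals of the images plus one and the same measure, which need not be moved.
-/

open ProbabilityTheory

section MeasureArithmetic

variable {α β : Type*} [MeasurableSpace α] [MeasurableSpace β]

lemma measure_sub_add_sub_of_le {κ μ ν : Measure α} [IsFiniteMeasure κ] [IsFiniteMeasure μ]
    (hκμ : κ ≤ μ) (hμν : μ ≤ ν) : ν - μ + (μ - κ) = ν - κ := by
  calc ν - μ + (μ - κ)
    _ = ν - μ + (μ - κ) + κ - κ := Measure.add_sub_cancel.symm
    _ = ν - κ := by
      rw [add_assoc, Measure.sub_add_cancel_of_le hκμ, Measure.sub_add_cancel_of_le hμν]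

lemma measure_map_sub_of_le {μ ν : Measure α} [IsFiniteMeasure μ] (h : μ ≤ ν) {f : α → β}
    (hf : Measurable f) : (ν - μ).map f = ν.map f - μ.map f := by
  conv_rhs => rw [← Measure.sub_add_cancel_of_le h, Measure.map_add _ _ hf,
    Measure.add_sub_cancel]

instance isFiniteMeasure_inf {μ ν : Measure α} [IsFiniteMeasure μ] : IsFiniteMeasure (μ ⊓ ν) :=
  isFiniteMeasure_of_le μ inf_le_left

/-- Gluing lemma: the third coordinate is drawn from the conditional law of `τ` given the shared
middle coordinate. -/
lemma exists_measure_map_eq_of_snd_eq_fst {γ : Type*} [MeasurableSpace γ] [StandardBorelSpace γ]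
    [Nonempty γ] {ρ : Measure (α × β)} {τ : Measure (β × γ)} [IsFiniteMeasure ρ]
    [IsFiniteMeasure τ] (h : ρ.snd = τ.fst) :
    ∃ π : Measure ((α × β) × γ),
      π.map Prod.fst = ρ ∧ π.map (fun w ↦ (w.1.2, w.2)) = τ := by
  refine ⟨ρ ⊗ₘ τ.condKernel.comap Prod.snd measurable_snd, Measure.fst_compProd _ _, ?_⟩
  have hm : Measurable fun w : (α × β) × γ ↦ (w.1.2, w.2) := by fun_prop
  conv_rhs => rw [← τ.disintegrate τ.condKernel, ← h]
  ext s hs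
  rw [Measure.map_apply hm hs, Measure.compProd_apply (hm hs), Measure.compProd_apply hs,
    Measure.snd, lintegral_map (Kernel.measurable_kernel_prodMk_left hs) measurable_snd]
  rfl

lemma measure_eq_of_one_le_inf_univ {μ ν : Measure α} [IsProbabilityMeasure μ]
    [IsProbabilityMeasure ν] (h : 1 ≤ (μ ⊓ ν) Set.univ) : μ = ν := by
  have : IsProbabilityMeasure (μ ⊓ ν) :=
    ⟨((Measure.le_iff'.1 inf_le_left _).trans_eq measure_univ).antisymm h⟩
  exact (Measure.eq_of_le_of_isProbabilityMeasure inf_le_left).symm.trans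
    (Measure.eq_of_le_of_isProbabilityMeasure inf_le_right)

end MeasureArithmetic

lemma rpow_add_rpow_le_two_rpow_mul_add_rpow {q : ℝ} (hq₀ : 0 < q) (hq : q ≤ 1) (a b : ℝ≥0∞) :
    a ^ q + b ^ q ≤ 2 ^ (1 - q) * (a + b) ^ q := by
  have hpow (t : ℝ≥0∞) : (t ^ q) ^ q⁻¹ = t := ENNReal.rpow_rpow_inv hq₀.ne' t
  have hexp : (q⁻¹ - 1) * q = 1 - q := by field_simp
  calc a ^ q + b ^ q
    _ = ((a ^ q + b ^ q) ^ q⁻¹) ^ q := (ENNReal.rpow_inv_rpow hq₀.ne' _).symm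
    _ ≤ (2 ^ (q⁻¹ - 1) * (a + b)) ^ q := by
      gcongr
      simpa only [hpow] using
        ENNReal.rpow_add_le_mul_rpow_add_rpow (a ^ q) (b ^ q) ((one_le_inv₀ hq₀).2 hq)
    _ = 2 ^ (1 - q) * (a + b) ^ q := by
      rw [ENNReal.mul_rpow_of_nonneg _ _ hq₀.le, ← ENNReal.rpow_mul, hexp]

section Wasserstein

variable {E : Type*} [MetricSpace E] [MeasurableSpace E] {p : ℝ} {μ ν σ : Measure E}

lemma Wp_le_of_coupling (γ : Measure (E × E)) (hfst : γ.map Prod.fst = μ)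
    (hsnd : γ.map Prod.snd = ν) : Wp p μ ν ≤ (∫⁻ z, edist z.1 z.2 ^ p ∂γ) ^ (1 / p) :=
  iInf₂_le γ ⟨hfst, hsnd⟩

lemma Wp_map_map_le {Ω : Type*} [MeasurableSpace Ω] (hp : 0 ≤ p) (α : Measure Ω) {f g : Ω → E}
    (hf : Measurable f) (hg : Measurable g) :
    Wp p (α.map f) (α.map g) ≤ (∫⁻ x, edist (f x) (g x) ^ p ∂α) ^ (1 / p) := by
  refine (Wp_le_of_coupling (α.map fun x ↦ (f x, g x))
    (Measure.fst_map_prodMk hg) (Measure.snd_map_prodMk hf)).trans ?_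
  gcongr
  exact lintegral_map_le _ _

lemma Wp_self (hp : 0 < p) (μ : Measure E) : Wp p μ μ = 0 := by
  simpa [hp, ENNReal.zero_rpow_of_pos] using
    Wp_map_map_le hp.le μ measurable_id measurable_id

lemma Wp_add_add_le (hp : 0 < p) (μ ν ρ : Measure E) : Wp p (μ + ρ) (ν + ρ) ≤ Wp p μ ν := by
  refine le_iInf₂ fun γ ⟨hfst, hsnd⟩ ↦ ?_
  have hdiag : Measurable fun x : E ↦ (x, x) := by fun_prop
  refine (Wp_le_of_coupling (γ + ρ.map fun x ↦ (x, x)) ?_ ?_).trans ?_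
  · rw [Measure.map_add _ _ measurable_fst, hfst, Measure.map_map measurable_fst hdiag]
    exact congrArg (μ + ·) Measure.map_id
  · rw [Measure.map_add _ _ measurable_snd, hsnd, Measure.map_map measurable_snd hdiag]
    exact congrArg (ν + ·) Measure.map_id
  · have hcost : ∫⁻ z, edist z.1 z.2 ^ p ∂ρ.map (fun x ↦ (x, x)) = 0 :=
      le_antisymm ((lintegral_map_le _ _).trans (by simp [hp])) zero_le
    rw [lintegral_add_measure, hcost, add_zero]

lemma Wp_smul_le (hp : 0 ≤ p) {c : ℝ≥0∞} (hc₀ : c ≠ 0) (hc : c ≠ ∞) (μ ν : Measure E) :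
    Wp p (c • μ) (c • ν) ≤ c ^ (1 / p) * Wp p μ ν := by
  have hcp₀ : c ^ (1 / p) ≠ 0 := by simp [ENNReal.rpow_eq_zero_iff, hc₀, hc]
  have hcp : c ^ (1 / p) ≠ ∞ := by simp [ENNReal.rpow_eq_top_iff, hc₀, hc]
  simp only [Wp, ENNReal.mul_iInf_of_ne hcp₀ hcp]
  refine le_iInf₂ fun γ ⟨hfst, hsnd⟩ ↦ (Wp_le_of_coupling (c • γ) ?_ ?_).trans_eq ?_
  · rw [Measure.map_smul, hfst]
  · rw [Measure.map_smul, hsnd]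
  · rw [lintegral_smul_measure, smul_eq_mul, ENNReal.mul_rpow_of_nonneg _ _ (by positivity)]

lemma Wp_smul (hp : 0 ≤ p) {c : ℝ≥0∞} (hc₀ : c ≠ 0) (hc : c ≠ ∞) (μ ν : Measure E) :
    Wp p (c • μ) (c • ν) = c ^ (1 / p) * Wp p μ ν := by
  refine (Wp_smul_le hp hc₀ hc μ ν).antisymm ?_
  have hinv := Wp_smul_le hp (ENNReal.inv_ne_zero.2 hc) (ENNReal.inv_ne_top.2 hc₀) (c • μ) (c • ν)
  rw [smul_smul, smul_smul, ENNReal.inv_mul_cancel hc₀ hc, one_smul, one_smul,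
    ENNReal.inv_rpow, ← ENNReal.div_eq_inv_mul] at hinv
  rw [mul_comm]
  exact ENNReal.mul_le_of_le_div hinv

lemma Wp_triangle [SecondCountableTopology E] [OpensMeasurableSpace E] [StandardBorelSpace E]
    [IsFiniteMeasure ν] (hp : 1 ≤ p) : Wp p μ σ ≤ Wp p μ ν + Wp p ν σ := by
  rcases isEmpty_or_nonempty E with hE | hE
  · rw [Subsingleton.elim σ μ, Wp_self (by positivity)]
    exact zero_le
  simp only [Wp, ENNReal.iInf_add, ENNReal.add_iInf]
  refine le_iInf₂ fun τ ⟨hτfst, hτsnd⟩ ↦ le_iInf₂ fun ρ ⟨hρfst, hρsnd⟩ ↦ ?_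
  have : IsFiniteMeasure (ρ.map Prod.snd) := hρsnd ▸ ‹_›
  have : IsFiniteMeasure (τ.map Prod.fst) := hτfst ▸ ‹_›
  have : IsFiniteMeasure ρ := Measure.isFiniteMeasure_of_map measurable_snd.aemeasurable
  have : IsFiniteMeasure τ := Measure.isFiniteMeasure_of_map measurable_fst.aemeasurable
  obtain ⟨π, rfl, rfl⟩ := exists_measure_map_eq_of_snd_eq_fst (hρsnd.trans hτfst.symm)
  have hm : Measurable fun w : (E × E) × E ↦ (w.1.2, w.2) := by fun_prop
  rw [Measure.map_map (by fun_prop) (by fun_prop)] at hρfst hτsnd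
  subst hρfst hτsnd
  rw [lintegral_map (by fun_prop) measurable_fst, lintegral_map (by fun_prop) hm]
  calc Wp p (π.map fun w ↦ w.1.1) (π.map fun w ↦ w.2)
    _ ≤ (∫⁻ w, edist w.1.1 w.2 ^ p ∂π) ^ (1 / p) :=
      Wp_map_map_le (by positivity) π (by fun_prop) (by fun_prop)
    _ ≤ (∫⁻ w, (edist w.1.1 w.1.2 + edist w.1.2 w.2) ^ p ∂π) ^ (1 / p) := by
      gcongr with w
      exact edist_triangle _ _ _
    _ ≤ (∫⁻ w, edist w.1.1 w.1.2 ^ p ∂π) ^ (1 / p) + (∫⁻ w, edist w.1.2 w.2 ^ p ∂π) ^ (1 / p) :=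
      ENNReal.lintegral_Lp_add_le (by fun_prop) (by fun_prop) hp

lemma Wp_le_Wp_map_add [SecondCountableTopology E] [OpensMeasurableSpace E] [StandardBorelSpace E]
    [IsFiniteMeasure μ] [IsFiniteMeasure ν] (hp : 1 ≤ p) {T : E → E} (hT : Measurable T) :
    Wp p μ ν ≤ Wp p (μ.map T) (ν.map T) +
      2 ^ (1 - 1 / p) * (∫⁻ x, edist x (T x) ^ p ∂(μ + ν)) ^ (1 / p) := by
  have hp₀ : 0 ≤ p := by positivity
  have hμ : Wp p μ (μ.map T) ≤ (∫⁻ x, edist x (T x) ^ p ∂μ) ^ (1 / p) := by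
    simpa only [Measure.map_id, id] using Wp_map_map_le hp₀ μ measurable_id hT
  have hν : Wp p (ν.map T) ν ≤ (∫⁻ x, edist x (T x) ^ p ∂ν) ^ (1 / p) := by
    simpa only [Measure.map_id, edist_comm, id] using Wp_map_map_le hp₀ ν hT measurable_id
  calc Wp p μ ν
    _ ≤ Wp p μ (μ.map T) + (Wp p (μ.map T) (ν.map T) + Wp p (ν.map T) ν) :=
      (Wp_triangle hp).trans (by gcongr; exact Wp_triangle hp)
    _ ≤ (∫⁻ x, edist x (T x) ^ p ∂μ) ^ (1 / p) +
        (Wp p (μ.map T) (ν.map T) + (∫⁻ x, edist x (T x) ^ p ∂ν) ^ (1 / p)) := by gcongr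
    _ = Wp p (μ.map T) (ν.map T) + ((∫⁻ x, edist x (T x) ^ p ∂μ) ^ (1 / p) +
        (∫⁻ x, edist x (T x) ^ p ∂ν) ^ (1 / p)) := add_left_comm _ _ _
    _ ≤ _ := by
      rw [lintegral_add_measure]
      gcongr
      exact rpow_add_rpow_le_two_rpow_mul_add_rpow (by positivity) (by bound) _ _

end Wasserstein

section Residual

variable {E : Type*} [MetricSpace E] [MeasurableSpace E] {p : ℝ}

/-- The cost `W_p(μ − μ∧ν, ν − μ∧ν)` of transporting only the mass not shared by `μ` and `ν`.
This is `W_p^$(μ, ν)` without the normalization of the two residuals to probability measures,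
and it makes sense on an arbitrary space, with `μ ∧ ν` the infimum in the lattice of measures. -/
noncomputable def residualWp (p : ℝ) (μ ν : Measure E) : ℝ≥0∞ :=
  Wp p (μ - μ ⊓ ν) (ν - μ ⊓ ν)

lemma Wp_map_residual_le (hp : 0 < p) {F : Type*} [MeasurableSpace F] (μ ν : Measure F)
    [IsFiniteMeasure μ] {T : F → E} (hT : Measurable T) :
    Wp p ((μ - μ ⊓ ν).map T) ((ν - μ ⊓ ν).map T) ≤ residualWp p (μ.map T) (ν.map T) := by
  have hle : (μ ⊓ ν).map T ≤ μ.map T ⊓ ν.map T :=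
    le_inf (Measure.map_mono inf_le_left hT) (Measure.map_mono inf_le_right hT)
  rw [measure_map_sub_of_le inf_le_left hT, measure_map_sub_of_le inf_le_right hT,
    ← measure_sub_add_sub_of_le hle inf_le_left, ← measure_sub_add_sub_of_le hle inf_le_right]
  exact Wp_add_add_le hp _ _ _

theorem stmt_14_general [SecondCountableTopology E] [OpensMeasurableSpace E]
    [StandardBorelSpace E] (hp : 1 ≤ p) {T : E → E} (hT : Measurable T) (μ ν : Measure E)
    [IsFiniteMeasure μ] [IsFiniteMeasure ν] :
    residualWp p μ ν ≤ residualWp p (μ.map T) (ν.map T) +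
      2 ^ (1 - 1 / p) *
        (∫⁻ x, edist x (T x) ^ p ∂((μ - μ ⊓ ν) + (ν - μ ⊓ ν))) ^ (1 / p) :=
  (Wp_le_Wp_map_add hp hT).trans <| by
    gcongr
    exact Wp_map_residual_le (by positivity) μ ν hT

end Residual

section Finite

variable {E : Type*} [MeasurableSpace E] [MeasurableSingletonClass E]

lemma measure_inf_singleton (μ ν : Measure E) (x : E) : (μ ⊓ ν) {x} = min (μ {x}) (ν {x}) := by
  refine le_antisymm
    (le_min (Measure.le_iff'.1 inf_le_left _) (Measure.le_iff'.1 inf_le_right _)) ?_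
  rw [Measure.inf_apply (measurableSet_singleton x)]
  refine le_sInf ?_
  rintro _ ⟨t, rfl⟩
  by_cases hx : x ∈ t
  · simp [Set.inter_singleton_of_mem hx]
  · simp [Set.inter_singleton_of_mem (Set.mem_compl hx)]

lemma measure_sub_inf_singleton (μ ν : Measure E) [IsFiniteMeasure μ] (x : E) :
    (μ - μ ⊓ ν) {x} = μ {x} - ν {x} := by
  rw [Measure.sub_apply (measurableSet_singleton x) inf_le_left, measure_inf_singleton, tsub_min]

variable [Fintype E]

lemma measInf_eq_inf (μ ν : Measure E) : measInf μ ν = μ ⊓ ν := by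
  refine Measure.ext_of_singleton fun x ↦ ?_
  rw [measInf, ← Measure.sum_fintype, Measure.sum_smul_dirac_singleton, measure_inf_singleton]

lemma lintegral_residual_add_residual (μ ν : Measure E) [IsFiniteMeasure μ] [IsFiniteMeasure ν]
    (f : E → ℝ≥0∞) :
    ∫⁻ x, f x ∂((μ - μ ⊓ ν) + (ν - μ ⊓ ν)) =
      ∑ x, f x * ((μ {x} - ν {x}) + (ν {x} - μ {x})) := by
  have hsub (x : E) : (ν - μ ⊓ ν) {x} = ν {x} - μ {x} := by
    rw [inf_comm, measure_sub_inf_singleton]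
  simp only [lintegral_fintype, Measure.add_apply, measure_sub_inf_singleton, hsub]

end Finite

lemma WpDollar_eq_residualWp {E : Type*} [MetricSpace E] [Fintype E] [MeasurableSpace E]
    [MeasurableSingletonClass E] {p : ℝ} (hp : 0 < p) (μ ν : Measure E)
    [IsProbabilityMeasure μ] [IsProbabilityMeasure ν] :
    WpDollar p μ ν = residualWp p μ ν := by
  by_cases h : μ = ν
  · simp [WpDollar, residualWp, h, Wp_self hp]
  set c := 1 - (μ ⊓ ν) Set.univ with hc
  have hc₀ : c ≠ 0 := fun h₀ ↦ h (measure_eq_of_one_le_inf_univ (tsub_eq_zero_iff_le.1 h₀))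
  have hc' : c ≠ ∞ := ENNReal.sub_ne_top ENNReal.one_ne_top
  rw [WpDollar, if_neg h, measInf_eq_inf, ← hc, ← Wp_smul hp.le hc₀ hc', smul_smul, smul_smul,
    ENNReal.mul_inv_cancel hc₀ hc', one_smul, one_smul, residualWp]

/-- **Lemma (basicbound).** Let `(E, d_E)` be a finite metric space, `p ≥ 1`,
`T : E → E` a map, and `μ`, `ν` probability measures on `E`. Then
`W_p^$(μ, ν) ≤ W_p^$(T_#μ, T_#ν)
  + 2^{1−1/p} (∑_{x ∈ E} d(x, T x)^p |μ({x}) − ν({x})|)^{1/p}`.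
(For extended nonnegative reals `a, b`, the quantity `(a − b) + (b − a)`, with
truncated subtraction, equals `|a − b|`.) -/
theorem stmt_14 {E : Type*} [MetricSpace E] [Fintype E]
    [MeasurableSpace E] [BorelSpace E]
    (p : ℝ) (hp : 1 ≤ p) (T : E → E)
    (μ ν : Measure E) [IsProbabilityMeasure μ] [IsProbabilityMeasure ν] :
    WpDollar p μ ν ≤
      WpDollar p (μ.map T) (ν.map T) +
        ENNReal.ofReal ((2 : ℝ) ^ (1 - 1 / p)) *
          (∑ x : E, edist x (T x) ^ p * ((μ {x} - ν {x}) + (ν {x} - μ {x}))) ^ (1 / p) := by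
  have hp₀ : 0 < p := by positivity
  have hT : Measurable T := measurable_of_countable T
  have : IsProbabilityMeasure (μ.map T) := Measure.isProbabilityMeasure_map hT.aemeasurable
  have : IsProbabilityMeasure (ν.map T) := Measure.isProbabilityMeasure_map hT.aemeasurable
  rw [WpDollar_eq_residualWp hp₀, WpDollar_eq_residualWp hp₀, ← ENNReal.ofReal_rpow_of_pos two_pos,
    ENNReal.ofReal_ofNat, ← lintegral_residual_add_residual]
  exact stmt_14_general hp hT μ ν
end
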